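/- arXiv:math/0306404 — 3 statements merged into one kernel-verified Lean document; each statement's English description precedes it below -/
import Mathlib

section
/- Let M be a bounded self-adjoint operator on a complex Hilbert space H and let (P_n) be orthogonal projections with n-dimensional ranges L_n such that P_n x → x for every x ∈ H. Then every isolated eigenvalue λ of M of finite multiplicity belongs to the uniform limiting set Λ: there exist z_n ∈ Spec₂(M|L_n) with z_n → λ. -/
open Filter Topology

noncomputable section

variable {H : Type*} [NormedAddCommGroup H] [InnerProductSpace ℂ H] [CompleteSpace H]

/-- The compression `P T |_(ran P)` of a linear operator `T` to the range of `P`. -/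
def compress (P : H →L[ℂ] H) (T : H →ₗ[ℂ] H) :
    LinearMap.range (P : H →ₗ[ℂ] H) →ₗ[ℂ] LinearMap.range (P : H →ₗ[ℂ] H) :=
  LinearMap.codRestrict (LinearMap.range (P : H →ₗ[ℂ] H))
    (((P : H →ₗ[ℂ] H).comp T).comp (LinearMap.range (P : H →ₗ[ℂ] H)).subtype)
    fun c => ⟨T c, rfl⟩

/-- `(M - z)²` as a linear map. -/
def sqz (M : H →ₗ[ℂ] H) (z : ℂ) : H →ₗ[ℂ] H :=
  (M - z • LinearMap.id) ∘ₗ (M - z • LinearMap.id)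

/-- The second order spectrum of `M` relative to the range of `P`:  the set of `z ∈ ℂ` for
which the compression of `(M - z)²` to the range of `P` is not invertible. -/
def spec2 (M : H →ₗ[ℂ] H) (P : H →L[ℂ] H) : Set ℂ :=
  {z | ¬ Function.Bijective (compress P (sqz M z))}

/-!
Let `Q` be the spectral projection of `M` at the isolated point `l` and `B := M - l`. Then
`Q B = 0` and `Q + C B = 1` for some bounded `C`, and as `Q` has finite rank, the strong
convergence of the projections `P n` on its range gives `Q (P n) → Q` in norm. Let `‖z - l‖ = r` be
small and `u` in the range of `P n`. Then `Q u` is controlled through `Q (M - z)² = (z - l)² Q`, and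
the remaining part `C B u` of `u` through `⟪u, (M - z)² u⟫`, because `‖B u‖² = ⟪u, B² u⟫`. Hence
`G z := P n (M - z)²` is bounded below on the range of `P n`, uniformly in `z` and in large `n`. If
`G z` were invertible for all `z` in the disc, the maximum principle for `z ↦ (G z)⁻¹ (G l) (P n ψ)`
would bound `P n ψ` by a multiple of `P n B² (P n ψ)`. For an eigenvector `ψ`, the latter tends
to `0`, but `P n ψ → ψ ≠ 0`.
-/

section HolomorphicInverse

variable {A : Type*} [NormedRing A] [NormedAlgebra ℂ A] [CompleteSpace A]

theorem differentiableAt_ringInverse_comp {p : ℂ → A} {z : ℂ} (hp : DifferentiableAt ℂ p z)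
    (hz : IsUnit (p z)) : DifferentiableAt ℂ (fun w => Ring.inverse (p w)) z :=
  DifferentiableAt.comp (g := Ring.inverse) z (differentiableAt_inverse hz) hp

theorem exists_not_isUnit_quadratic [Nontrivial A] (a b : A) :
    ∃ z : ℂ, ¬ IsUnit (z ^ 2 • (1 : A) + z • a + b) := by
  by_contra! hunit
  set p : ℂ → A := fun z => z ^ 2 • (1 : A) + z • a + b
  set q : ℂ → A := fun z => 1 + z⁻¹ • a + z⁻¹ ^ 2 • b
  have hdiff : Differentiable ℂ fun z => Ring.inverse (p z) := fun z =>
    differentiableAt_ringInverse_comp (by fun_prop) (hunit z)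
  have hinv : Tendsto (fun z : ℂ => z⁻¹) (Bornology.cobounded ℂ) (𝓝 0) := tendsto_inv₀_cobounded
  have hq : Tendsto q (Bornology.cobounded ℂ) (𝓝 1) := by
    simpa [q] using
      ((tendsto_const_nhds (x := (1 : A))).add (hinv.smul_const a)).add ((hinv.pow 2).smul_const b)
  have hpq : ∀ᶠ z in Bornology.cobounded ℂ, z⁻¹ ^ 2 • Ring.inverse (q z) = Ring.inverse (p z) := by
    filter_upwards [Bornology.eventually_ne_cobounded (0 : ℂ),
      hq.eventually (Units.isOpen.mem_nhds isUnit_one)] with z hz hqz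
    have hfactor : p z = z ^ 2 • q z := by
      simp only [p, q, smul_add, smul_smul]
      field_simp
      simp
    have hright : p z * (z⁻¹ ^ 2 • Ring.inverse (q z)) = 1 := by
      rw [hfactor, smul_mul_smul_comm, Ring.mul_inverse_cancel _ hqz, ← mul_pow,
        mul_inv_cancel₀ hz, one_pow, one_smul]
    rw [← mul_one (Ring.inverse (p z)), ← hright, Ring.inverse_mul_cancel_left _ _ (hunit z)]
  have hzero : Tendsto (fun z => Ring.inverse (p z)) (cocompact ℂ) (𝓝 0) := by
    have hqinv : Tendsto (fun z => Ring.inverse (q z)) (Bornology.cobounded ℂ) (𝓝 1) := by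
      simpa [Function.comp_def] using (NormedRing.inverse_continuousAt (1 : Aˣ)).tendsto.comp hq
    rw [← Metric.cobounded_eq_cocompact]
    exact Tendsto.congr' hpq (by simpa using (hinv.pow 2).smul hqinv)
  exact Ring.isUnit_iff_inverse_ne_zero.1 (hunit 0)
    (hdiff.apply_eq_of_tendsto_cocompact 0 hzero)

variable {E : Type*} [NormedAddCommGroup E] [NormedSpace ℂ E] [CompleteSpace E]

theorem exists_not_isUnit_mem_closedBall {G : ℂ → E →L[ℂ] E} (hG : Differentiable ℂ G)
    {a : ℂ} {r C : ℝ} (hr : 0 < r) (hsphere : ∀ z ∈ Metric.sphere a r, ∀ x, ‖x‖ ≤ C * ‖G z x‖)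
    {x : E} (hx : C * ‖G a x‖ < ‖x‖) : ∃ z ∈ Metric.closedBall a r, ¬ IsUnit (G z) := by
  by_contra! hunit
  set g : ℂ → E := fun z => Ring.inverse (G z) (G a x)
  have hdiff : DiffContOnCl ℂ g (Metric.ball a r) := by
    refine DifferentiableOn.diffContOnCl fun z hz => DifferentiableAt.differentiableWithinAt ?_
    rw [closure_ball a hr.ne'] at hz
    exact (differentiableAt_ringInverse_comp (hG z) (hunit z hz)).clm_apply
      (differentiableAt_const _)
  have hfrontier : ∀ z ∈ frontier (Metric.ball a r), ‖g z‖ ≤ C * ‖G a x‖ := by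
    intro z hz
    rw [frontier_ball a hr.ne'] at hz
    have hGg : G z (g z) = G a x :=
      congr($(Ring.mul_inverse_cancel _ (hunit z (Metric.sphere_subset_closedBall hz))) (G a x))
    simpa only [hGg] using hsphere z hz (g z)
  have hga : g a = x :=
    congr($(Ring.inverse_mul_cancel _ (hunit a (Metric.mem_closedBall_self hr.le))) x)
  have hle := Complex.norm_le_of_forall_mem_frontier_norm_le Metric.isBounded_ball hdiff hfrontier
    (subset_closure (Metric.mem_ball_self hr))
  rw [hga] at hle
  exact hx.not_ge hle

end HolomorphicInverse

section IsolatedPoints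

theorem continuousOn_of_isolated {X Y : Type*} [TopologicalSpace X] [T1Space X]
    [TopologicalSpace Y] {g : X → Y} {s : Set X} {x : X} (hx : ∀ᶠ y in 𝓝[s] x, y = x)
    (hg : ContinuousOn g {x}ᶜ) : ContinuousOn g s := by
  intro y _
  obtain rfl | hyx := eq_or_ne y x
  · exact tendsto_pure_nhds g y |>.mono_left (le_pure_iff.2 hx)
  · exact (hg.continuousAt (isOpen_compl_singleton.mem_nhds hyx)).continuousWithinAt

theorem exists_isStarProjection_of_isolated {A : Type*} [CStarAlgebra A] {a : A}
    (ha : IsStarNormal a) {l : ℂ} (hl : ∀ᶠ z in 𝓝[spectrum ℂ a] l, z = l) :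
    ∃ e b : A, IsStarProjection e ∧ (a - l • 1) * e = 0 ∧ e * (a - l • 1) = 0 ∧
      e + b * (a - l • 1) = 1 := by
  set χ : ℂ → ℂ := fun z => if z = l then 1 else 0
  -- Since `0⁻¹ = 0`, the identity `χ z + ρ z * (z - l) = 1` also holds at `z = l`.
  set ρ : ℂ → ℂ := fun z => (z - l)⁻¹
  have hχ : ContinuousOn χ (spectrum ℂ a) := continuousOn_of_isolated hl <|
    continuousOn_const.congr fun _ hz => if_neg hz
  have hρ : ContinuousOn ρ (spectrum ℂ a) := continuousOn_of_isolated hl <|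
    (continuousOn_id.sub continuousOn_const).inv₀ fun _ hz => sub_ne_zero.2 hz
  have hid : ContinuousOn (fun z : ℂ => z - l) (spectrum ℂ a) := by fun_prop
  have hsub : a - l • 1 = cfc (fun z : ℂ => z - l) a := by
    rw [cfc_sub (fun z : ℂ => z) (fun _ => l) a, cfc_id' ℂ a, cfc_const l a,
      Algebra.algebraMap_eq_smul_one]
  refine ⟨cfc χ a, cfc ρ a, ⟨?_, ?_⟩, ?_, ?_, ?_⟩
  · rw [IsIdempotentElem, ← cfc_mul χ χ a]
    congr! 2 with z
    simp [χ]
  · rw [IsSelfAdjoint, ← cfc_star]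
    congr! 2 with z
    simp [χ, apply_ite]
  · rw [hsub, ← cfc_mul _ χ a, ← cfc_zero ℂ a]
    congr! 2 with z
    simp [χ, sub_eq_zero]
  · rw [hsub, ← cfc_mul χ _ a, ← cfc_zero ℂ a]
    congr! 2 with z
    simp [χ, sub_eq_zero]
  · rw [hsub, ← cfc_mul ρ _ a, ← cfc_add a χ (fun z => ρ z * (z - l)) hχ (hρ.mul hid),
      ← cfc_one ℂ a]
    congr! 2 with z
    by_cases h : z = l <;> simp [χ, ρ, h, sub_eq_zero]

end IsolatedPoints

section FiniteRank

theorem tendsto_clm_of_finiteDimensional {𝕜 E F ι : Type*} [NontriviallyNormedField 𝕜]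
    [CompleteSpace 𝕜] [NormedAddCommGroup E] [NormedSpace 𝕜 E] [FiniteDimensional 𝕜 E]
    [NormedAddCommGroup F] [NormedSpace 𝕜 F] {f : Filter ι} {T : ι → E →L[𝕜] F} {T₀ : E →L[𝕜] F}
    (hT : ∀ x, Tendsto (fun i => T i x) f (𝓝 (T₀ x))) : Tendsto T f (𝓝 T₀) := by
  let e : (E →L[𝕜] F) ≃L[𝕜] Fin (Module.finrank 𝕜 E) → F :=
    ((ContinuousLinearEquiv.ofFinrankEq (Module.finrank_fin_fun 𝕜).symm).arrowCongr
      (1 : F ≃L[𝕜] F)).trans (ContinuousLinearEquiv.piRing _)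
  rw [e.toHomeomorph.isInducing.tendsto_nhds_iff]
  exact tendsto_pi_nhds.2 fun i => hT _

theorem tendsto_comp_of_finiteDimensional_range {𝕜 E F G ι : Type*} [NontriviallyNormedField 𝕜]
    [CompleteSpace 𝕜] [NormedAddCommGroup E] [NormedSpace 𝕜 E] [NormedAddCommGroup F]
    [NormedSpace 𝕜 F] [NormedAddCommGroup G] [NormedSpace 𝕜 G] {f : Filter ι}
    {T : ι → F →L[𝕜] G} {T₀ : F →L[𝕜] G} {S : E →L[𝕜] F} [FiniteDimensional 𝕜 S.range]
    (hT : ∀ x ∈ S.range, Tendsto (fun i => T i x) f (𝓝 (T₀ x))) :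
    Tendsto (fun i => T i ∘L S) f (𝓝 (T₀ ∘L S)) := by
  have hrestrict : Tendsto (fun i => T i ∘L S.range.subtypeL) f (𝓝 (T₀ ∘L S.range.subtypeL)) :=
    tendsto_clm_of_finiteDimensional fun x => hT x x.2
  exact ((ContinuousLinearMap.precomp G S.rangeRestrict).continuous.tendsto _).comp hrestrict

end FiniteRank

section Coercivity

theorem sq_norm_mul_norm_apply_le {𝕜 E : Type*} [NontriviallyNormedField 𝕜] [NormedAddCommGroup E]
    [NormedSpace 𝕜 E] {B Q : E →L[𝕜] E} (hQ : ‖Q‖ ≤ 1) (hQB : Q * B = 0) (P : E →L[𝕜] E) (w : 𝕜)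
    (u : E) :
    ‖w‖ ^ 2 * ‖Q u‖ ≤
      ‖P (((B - w • (1 : E →L[𝕜] E)) ^ 2) u)‖ + ‖Q - Q * P‖ * (‖B‖ + ‖w‖) ^ 2 * ‖u‖ := by
  set T : E →L[𝕜] E := (B - w • 1) ^ 2
  have hT : ‖T‖ ≤ (‖B‖ + ‖w‖) ^ 2 := by
    have hsub : ‖B - w • (1 : E →L[𝕜] E)‖ ≤ ‖B‖ + ‖w‖ :=
      (norm_sub_le _ _).trans <| by
        grw [norm_smul, ContinuousLinearMap.one_def, ContinuousLinearMap.norm_id_le, mul_one]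
    grw [norm_pow_le' _ two_pos, hsub]
  have hQT : Q * T = w ^ 2 • Q := by
    simp only [T, sq, mul_sub, sub_mul, ← mul_assoc, hQB, mul_smul_comm, mul_one, zero_mul,
      smul_mul_assoc, zero_sub, smul_neg, sub_neg_eq_add, mul_smul, smul_zero, zero_add, neg_zero]
  have hsplit : w ^ 2 • Q u = Q (P (T u)) + (Q - Q * P) (T u) := by
    have := congr($hQT u)
    simpa using this.symm
  calc ‖w‖ ^ 2 * ‖Q u‖ = ‖w ^ 2 • Q u‖ := by rw [norm_smul, norm_pow]
    _ = ‖Q (P (T u)) + (Q - Q * P) (T u)‖ := by rw [hsplit]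
    _ ≤ ‖Q‖ * ‖P (T u)‖ + ‖Q - Q * P‖ * (‖T‖ * ‖u‖) := by
      grw [norm_add_le, Q.le_opNorm, (Q - Q * P).le_opNorm, T.le_opNorm]
    _ ≤ ‖P (T u)‖ + ‖Q - Q * P‖ * (‖B‖ + ‖w‖) ^ 2 * ‖u‖ := by
      grw [hQ, hT, one_mul, mul_assoc]

variable {𝕜 E : Type*} [RCLike 𝕜] [NormedAddCommGroup E] [InnerProductSpace 𝕜 E]

theorem sq_norm_apply_le_of_isSymmetric {B : E →L[𝕜] E} (hB : (B : E →ₗ[𝕜] E).IsSymmetric)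
    (w : 𝕜) (u : E) :
    ‖B u‖ ^ 2 ≤
      2 * ‖inner 𝕜 u (((B - w • (1 : E →L[𝕜] E)) ^ 2) u)‖ + 6 * (‖w‖ * ‖u‖) ^ 2 := by
  set T : E →L[𝕜] E := (B - w • 1) ^ 2
  have hexpand : inner 𝕜 (B u) (B u) =
      inner 𝕜 u (T u) + 2 * w * inner 𝕜 u (B u) - w ^ 2 * inner 𝕜 u u := by
    have hT : T u = B (B u) - (2 * w) • B u + w ^ 2 • u := by
      simp only [T, sq, mul_apply_eq_comp, sub_apply, smul_apply, one_apply_eq_self, map_sub,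
        map_smul]
      module
    have hBB : inner 𝕜 (B u) (B u) = inner 𝕜 u (B (B u)) := hB u (B u)
    rw [hT, hBB, inner_add_right, inner_sub_right, inner_smul_right, inner_smul_right]
    ring
  have htriangle : ‖B u‖ ^ 2 ≤ ‖inner 𝕜 u (T u)‖ + 2 * ‖w‖ * (‖u‖ * ‖B u‖) + ‖w‖ ^ 2 * ‖u‖ ^ 2 :=
    calc ‖B u‖ ^ 2 = ‖inner 𝕜 (B u) (B u)‖ := by simp [inner_self_eq_norm_sq_to_K]
      _ ≤ ‖inner 𝕜 u (T u)‖ + ‖2 * w * inner 𝕜 u (B u)‖ + ‖w ^ 2 * inner 𝕜 u u‖ := by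
        grw [hexpand, norm_sub_le, norm_add_le]
      _ ≤ _ := by
        grw [norm_mul, norm_mul, norm_mul, norm_pow, norm_inner_le_norm u (B u),
          norm_inner_le_norm u u]
        simp [sq]
  nlinarith [sq_nonneg (2 * ‖w‖ * ‖u‖ - ‖B u‖)]

theorem norm_le_of_isSymmetric_of_add_mul_eq_one {B C P Q : E →L[𝕜] E}
    (hB : (B : E →ₗ[𝕜] E).IsSymmetric) (hP : (P : E →ₗ[𝕜] E).IsSymmetric) (hQC : Q + C * B = 1)
    {w : 𝕜} (hw : 24 * (‖C‖ * ‖w‖) ^ 2 ≤ 1) {u : E} (hu : P u = u) :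
    ‖u‖ ≤ 2 * ‖Q u‖ + 4 * ‖C‖ ^ 2 * ‖P (((B - w • (1 : E →L[𝕜] E)) ^ 2) u)‖ := by
  set r := ‖P (((B - w • (1 : E →L[𝕜] E)) ^ 2) u)‖
  obtain hu0 | hu0 := (norm_nonneg u).eq_or_lt
  · rw [← hu0]
    positivity
  have hnorm : ‖u‖ ≤ ‖Q u‖ + ‖C‖ * ‖B u‖ :=
    calc ‖u‖ = ‖Q u + C (B u)‖ := congr(‖$hQC.symm u‖)
      _ ≤ ‖Q u‖ + ‖C‖ * ‖B u‖ := by grw [norm_add_le, C.le_opNorm]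
  have hinner : ‖inner 𝕜 u (((B - w • (1 : E →L[𝕜] E)) ^ 2) u)‖ ≤ ‖u‖ * r := by
    have hmove := hP u (((B - w • (1 : E →L[𝕜] E)) ^ 2) u)
    simp only [ContinuousLinearMap.coe_coe, hu] at hmove
    rw [hmove]
    exact norm_inner_le_norm _ _
  have hBu : ‖B u‖ ^ 2 ≤ 2 * (‖u‖ * r) + 6 * (‖w‖ * ‖u‖) ^ 2 := by
    grw [sq_norm_apply_le_of_isSymmetric hB w u, hinner]
  have hCBu : (‖C‖ * ‖B u‖) ^ 2 ≤ 2 * ‖C‖ ^ 2 * (‖u‖ * r) + ‖u‖ ^ 2 / 4 :=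
    calc (‖C‖ * ‖B u‖) ^ 2 = ‖C‖ ^ 2 * ‖B u‖ ^ 2 := mul_pow _ _ 2
      _ ≤ ‖C‖ ^ 2 * (2 * (‖u‖ * r) + 6 * (‖w‖ * ‖u‖) ^ 2) := by grw [hBu]
      _ = 2 * ‖C‖ ^ 2 * (‖u‖ * r) + 24 * (‖C‖ * ‖w‖) ^ 2 * (‖u‖ ^ 2 / 4) := by ring
      _ ≤ 2 * ‖C‖ ^ 2 * (‖u‖ * r) + ‖u‖ ^ 2 / 4 := by grw [hw, one_mul]
  refine le_of_mul_le_mul_left ?_ hu0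
  nlinarith [sq_nonneg (‖C‖ * ‖B u‖ - ‖u‖ / 2), mul_le_mul_of_nonneg_left hnorm hu0.le]

theorem norm_le_mul_norm_apply_sub_smul_one_sq {B C P Q : E →L[𝕜] E}
    (hB : (B : E →ₗ[𝕜] E).IsSymmetric) (hP : (P : E →ₗ[𝕜] E).IsSymmetric) (hQ : ‖Q‖ ≤ 1)
    (hQB : Q * B = 0) (hQC : Q + C * B = 1) {w : 𝕜} (hw0 : w ≠ 0)
    (hw : 24 * (‖C‖ * ‖w‖) ^ 2 ≤ 1) (hQP : 4 * (‖Q - Q * P‖ * (‖B‖ + ‖w‖) ^ 2) ≤ ‖w‖ ^ 2)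
    {u : E} (hu : P u = u) :
    ‖u‖ ≤ (4 / ‖w‖ ^ 2 + 8 * ‖C‖ ^ 2) * ‖P (((B - w • (1 : E →L[𝕜] E)) ^ 2) u)‖ := by
  have haway := norm_le_of_isSymmetric_of_add_mul_eq_one hB hP hQC hw hu
  have hon := sq_norm_mul_norm_apply_le hQ hQB P w u
  set r := ‖P (((B - w • (1 : E →L[𝕜] E)) ^ 2) u)‖
  have hw2 : 0 < ‖w‖ ^ 2 := by positivity
  have hQu : ‖Q u‖ ≤ r / ‖w‖ ^ 2 + ‖u‖ / 4 := by
    refine le_of_mul_le_mul_left ?_ hw2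
    calc ‖w‖ ^ 2 * ‖Q u‖ ≤ r + ‖Q - Q * P‖ * (‖B‖ + ‖w‖) ^ 2 * ‖u‖ := hon
      _ ≤ r + ‖w‖ ^ 2 / 4 * ‖u‖ := by gcongr; linarith
      _ = ‖w‖ ^ 2 * (r / ‖w‖ ^ 2 + ‖u‖ / 4) := by field_simp
  calc ‖u‖ ≤ 2 * (2 * ‖Q u‖ + 4 * ‖C‖ ^ 2 * r) - ‖u‖ := by linarith
    _ ≤ 2 * (2 * (r / ‖w‖ ^ 2 + ‖u‖ / 4) + 4 * ‖C‖ ^ 2 * r) - ‖u‖ := by gcongr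
    _ = (4 / ‖w‖ ^ 2 + 8 * ‖C‖ ^ 2) * r := by ring

end Coercivity

section SecondOrderPencil

theorem apply_eq_self_of_mem_range {R V : Type*} [Semiring R] [TopologicalSpace V] [AddCommMonoid V]
    [Module R V] {P : V →L[R] V} (hP : IsIdempotentElem P) {u : V} (hu : u ∈ P.range) :
    P u = u :=
  (LinearMap.IsIdempotentElem.mem_range_iff
    (ContinuousLinearMap.isIdempotentElem_toLinearMap_iff.2 hP)).1 hu

section NormedSpace

variable {E : Type*} [NormedAddCommGroup E] [NormedSpace ℂ E]

/-- The quadratic operator pencil `z ↦ P (M - z)²|_(ran P)`, whose spectrum is `spec2 M P`. Its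
values are continuous linear maps, so that it takes values in a normed algebra. -/
def secondOrderPencil (M P : E →L[ℂ] E) (z : ℂ) : P.range →L[ℂ] P.range :=
  P.rangeRestrict ∘L ((M - z • 1) ^ 2) ∘L P.range.subtypeL

theorem norm_secondOrderPencil_apply (M P : E →L[ℂ] E) (z : ℂ) (u : P.range) :
    ‖secondOrderPencil M P z u‖ = ‖P (((M - z • (1 : E →L[ℂ] E)) ^ 2) u)‖ :=
  rfl

theorem differentiable_secondOrderPencil (M P : E →L[ℂ] E) :
    Differentiable ℂ (secondOrderPencil M P) := by
  unfold secondOrderPencil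
  fun_prop

theorem secondOrderPencil_eq_quadratic (M : E →L[ℂ] E) {P : E →L[ℂ] E} (hP : IsIdempotentElem P)
    (z : ℂ) :
    secondOrderPencil M P z = z ^ 2 • (1 : P.range →L[ℂ] P.range) +
      z • ((-2 : ℂ) • P.rangeRestrict ∘L M ∘L P.range.subtypeL) +
      P.rangeRestrict ∘L (M ^ 2) ∘L P.range.subtypeL := by
  have hexpand : (M - z • (1 : E →L[ℂ] E)) ^ 2 = z ^ 2 • 1 + z • (-2 : ℂ) • M + M ^ 2 := by
    simp only [sq, mul_sub, sub_mul, mul_one, one_mul, mul_smul_comm, smul_mul_assoc]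
    module
  have hretract : P.rangeRestrict ∘L P.range.subtypeL = 1 := by
    ext u
    exact apply_eq_self_of_mem_range hP u.2
  rw [secondOrderPencil, hexpand, ← hretract]
  simp only [ContinuousLinearMap.add_comp, ContinuousLinearMap.comp_add,
    ContinuousLinearMap.smul_comp, ContinuousLinearMap.comp_smul, ContinuousLinearMap.one_def,
    ContinuousLinearMap.id_comp]

end NormedSpace

variable {M P : H →L[ℂ] H}

theorem mem_spec2_iff (hP : IsIdempotentElem P) {z : ℂ} :
    z ∈ spec2 (M : H →ₗ[ℂ] H) P ↔ ¬ IsUnit (secondOrderPencil M P z) := by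
  have := (ContinuousLinearMap.IsIdempotentElem.isClosed_range hP).completeSpace_coe
  rw [ContinuousLinearMap.isUnit_iff_bijective]
  rfl

theorem isClosed_spec2 (hP : IsIdempotentElem P) : IsClosed (spec2 (M : H →ₗ[ℂ] H) P) := by
  have := (ContinuousLinearMap.IsIdempotentElem.isClosed_range hP).completeSpace_coe
  have hspec : spec2 (M : H →ₗ[ℂ] H) P =
      secondOrderPencil M P ⁻¹' nonunits (P.range →L[ℂ] P.range) :=
    Set.ext fun z => mem_spec2_iff hP
  rw [hspec]
  exact (nonunits.isClosed (R := P.range →L[ℂ] P.range)).preimage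
    (differentiable_secondOrderPencil M P).continuous

theorem spec2_nonempty (hP : IsIdempotentElem P) (hP0 : P ≠ 0) :
    (spec2 (M : H →ₗ[ℂ] H) P).Nonempty := by
  have := (ContinuousLinearMap.IsIdempotentElem.isClosed_range hP).completeSpace_coe
  have : Nontrivial P.range := by
    rw [Submodule.nontrivial_iff_ne_bot, Ne, LinearMap.range_eq_bot]
    exact fun h => hP0 (ContinuousLinearMap.coe_injective h)
  obtain ⟨z, hz⟩ := exists_not_isUnit_quadratic
    ((-2 : ℂ) • P.rangeRestrict ∘L M ∘L P.range.subtypeL)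
    (P.rangeRestrict ∘L (M ^ 2) ∘L P.range.subtypeL)
  exact ⟨z, (mem_spec2_iff hP).2 (secondOrderPencil_eq_quadratic M hP z ▸ hz)⟩

end SecondOrderPencil

section Limit

theorem exists_tendsto_of_forall_isClosed {ι X : Type*} [PseudoMetricSpace X] [ProperSpace X]
    {f : Filter ι} {S : ι → Set X} {x : X} (hS : ∀ i, IsClosed (S i))
    (hx : ∀ᶠ r in 𝓝[>] 0, ∀ᶠ i in f, (S i ∩ Metric.closedBall x r).Nonempty) :
    ∃ s : ι → X, (∀ i, (S i).Nonempty → s i ∈ S i) ∧ Tendsto s f (𝓝 x) := by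
  have hnearest : ∀ i, ∃ y, (S i).Nonempty → y ∈ S i ∧ Metric.infDist x (S i) = dist x y := by
    intro i
    by_cases hi : (S i).Nonempty
    · obtain ⟨y, hy⟩ := (hS i).exists_infDist_eq_dist hi x
      exact ⟨y, fun _ => hy⟩
    · exact ⟨x, fun h => absurd h hi⟩
  choose s hs using hnearest
  refine ⟨s, fun i hi => (hs i hi).1, Metric.tendsto_nhds.2 fun η hη => ?_⟩
  obtain ⟨r, hr, hrη⟩ := (hx.and (Ioo_mem_nhdsGT hη)).exists
  filter_upwards [hr] with i ⟨y, hyS, hyx⟩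
  calc dist (s i) x = Metric.infDist x (S i) := by rw [(hs i ⟨y, hyS⟩).2, dist_comm]
    _ ≤ dist x y := Metric.infDist_le_dist_of_mem hyS
    _ ≤ r := Metric.mem_closedBall'.1 hyx
    _ < η := hrη.2

theorem isSelfAdjoint_sub_real_smul_one {A : Type*} [Ring A] [StarRing A] [Module ℂ A]
    [StarModule ℂ A] {a : A} (ha : IsSelfAdjoint a) (l : ℝ) : IsSelfAdjoint (a - (l : ℂ) • 1) :=
  ha.sub (IsSelfAdjoint.smul (Complex.conj_ofReal l) (.one A))

theorem tendsto_mul_of_tendsto_apply_range {ι : Type*} {f : Filter ι} {P : ι → H →L[ℂ] H}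
    (hP : ∀ i, IsSelfAdjoint (P i)) {Q : H →L[ℂ] H} (hQ : IsSelfAdjoint Q)
    [FiniteDimensional ℂ Q.range] (hPQ : ∀ x ∈ Q.range, Tendsto (fun i => P i x) f (𝓝 x)) :
    Tendsto (fun i => Q * P i) f (𝓝 Q) := by
  have hlim : Tendsto (fun i => P i * Q) f (𝓝 Q) :=
    tendsto_comp_of_finiteDimensional_range (T₀ := 1) hPQ
  simpa only [star_mul, hQ.star_eq, (hP _).star_eq] using hlim.star

variable {ι : Type*} {f : Filter ι} {M : H →L[ℂ] H}

theorem nonempty_spec2_inter_closedBall {P : H →L[ℂ] H} (hM : IsSelfAdjoint M)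
    (hP : IsStarProjection P) {C Q : H →L[ℂ] H} (hQ : ‖Q‖ ≤ 1) {l : ℝ}
    (hQM : Q * (M - (l : ℂ) • 1) = 0) (hQC : Q + C * (M - (l : ℂ) • 1) = 1) {r : ℝ} (hr : 0 < r)
    (hrC : 24 * (‖C‖ * r) ^ 2 ≤ 1)
    (hQP : 4 * (‖Q - Q * P‖ * (‖M - (l : ℂ) • (1 : H →L[ℂ] H)‖ + r) ^ 2) ≤ r ^ 2) {x : H}
    (hPx : P x = x)
    (hx : (4 / r ^ 2 + 8 * ‖C‖ ^ 2) * ‖((M - (l : ℂ) • (1 : H →L[ℂ] H)) ^ 2) x‖ < ‖x‖) :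
    (spec2 (M : H →ₗ[ℂ] H) P ∩ Metric.closedBall (l : ℂ) r).Nonempty := by
  have hPi := hP.isIdempotentElem
  have := (ContinuousLinearMap.IsIdempotentElem.isClosed_range hPi).completeSpace_coe
  have hsphere : ∀ z ∈ Metric.sphere (l : ℂ) r, ∀ u : P.range,
      ‖u‖ ≤ (4 / r ^ 2 + 8 * ‖C‖ ^ 2) * ‖secondOrderPencil M P z u‖ := by
    intro z hz u
    have hzr : ‖z - l‖ = r := mem_sphere_iff_norm.1 hz
    have hz0 : z - l ≠ 0 := norm_pos_iff.1 (hzr ▸ hr)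
    have hu : P u = u := apply_eq_self_of_mem_range hPi u.2
    have hshift : M - z • (1 : H →L[ℂ] H) = (M - (l : ℂ) • 1) - (z - l) • 1 := by module
    rw [norm_secondOrderPencil_apply, hshift]
    subst hzr
    exact norm_le_mul_norm_apply_sub_smul_one_sq
      (isSelfAdjoint_sub_real_smul_one hM l).isSymmetric hP.isSelfAdjoint.isSymmetric hQ hQM hQC
      hz0 hrC hQP hu
  have hcentre : (4 / r ^ 2 + 8 * ‖C‖ ^ 2) * ‖secondOrderPencil M P l ⟨x, x, hPx⟩‖ < ‖x‖ := by
    refine lt_of_le_of_lt ?_ hx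
    grw [norm_secondOrderPencil_apply, P.le_opNorm, hP.norm_le, one_mul]
  obtain ⟨z, hz, hunit⟩ := exists_not_isUnit_mem_closedBall (differentiable_secondOrderPencil M P)
    hr hsphere hcentre
  exact ⟨z, (mem_spec2_iff hPi).2 hunit, hz⟩

theorem eventually_nonempty_spec2_inter_closedBall (hM : IsSelfAdjoint M) {P : ι → H →L[ℂ] H}
    (hP : ∀ i, IsStarProjection (P i)) {C Q : H →L[ℂ] H} (hQ : ‖Q‖ ≤ 1) {l : ℝ}
    (hQM : Q * (M - (l : ℂ) • 1) = 0) (hQC : Q + C * (M - (l : ℂ) • 1) = 1)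
    (hQP : Tendsto (fun i => Q * P i) f (𝓝 Q)) {ψ : H} (hψ0 : ψ ≠ 0) (hψ : M ψ = (l : ℂ) • ψ)
    (hPψ : Tendsto (fun i => P i ψ) f (𝓝 ψ)) :
    ∀ᶠ r in 𝓝[>] 0, ∀ᶠ i in f,
      (spec2 (M : H →ₗ[ℂ] H) (P i) ∩ Metric.closedBall (l : ℂ) r).Nonempty := by
  have hrsmall : ∀ᶠ r : ℝ in 𝓝[>] 0, 24 * (‖C‖ * r) ^ 2 < 1 := by
    have hcont : Continuous fun r : ℝ => 24 * (‖C‖ * r) ^ 2 := by fun_prop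
    exact (hcont.tendsto' 0 0 (by simp)).mono_left nhdsWithin_le_nhds
      |>.eventually_lt_const one_pos
  filter_upwards [hrsmall, self_mem_nhdsWithin] with r hrC (hr : 0 < r)
  set B : H →L[ℂ] H := M - (l : ℂ) • 1 with hB
  have hQsmall : ∀ᶠ i in f, 4 * (‖Q - Q * P i‖ * (‖B‖ + r) ^ 2) < r ^ 2 := by
    have hlim : Tendsto (fun i => 4 * (‖Q - Q * P i‖ * (‖B‖ + r) ^ 2)) f (𝓝 0) := by
      simpa using (((hQP.const_sub Q).norm).mul_const ((‖B‖ + r) ^ 2)).const_mul 4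
    exact hlim.eventually_lt_const (by positivity)
  have hψsmall : ∀ᶠ i in f, (4 / r ^ 2 + 8 * ‖C‖ ^ 2) * ‖(B ^ 2) (P i ψ)‖ < ‖P i ψ‖ := by
    have hBψ : (B ^ 2) ψ = 0 := by simp [hB, sq, hψ]
    have hcont : Continuous fun x => (4 / r ^ 2 + 8 * ‖C‖ ^ 2) * ‖(B ^ 2) x‖ := by fun_prop
    exact ((hcont.tendsto' ψ 0 (by rw [hBψ, norm_zero, mul_zero])).comp hPψ).eventually_lt
      hPψ.norm (norm_pos_iff.2 hψ0)
  filter_upwards [hQsmall, hψsmall] with i hQi hψi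
  exact nonempty_spec2_inter_closedBall hM (hP i) hQ hQM hQC hr hrC.le hQi.le
    congr($((hP i).isIdempotentElem.eq) ψ) hψi

theorem isolated_eigenvalue_mem_limit_of_secondOrderSpectra_of_bounded_general
    {ι : Type*} {f : Filter ι} (M : H →L[ℂ] H) (hM : IsSelfAdjoint M)
    (P : ι → H →L[ℂ] H) (hP : ∀ i, IsStarProjection (P i)) (l : ℝ)
    (hPlim : ∀ x : H, M x = (l : ℂ) • x → Tendsto (fun i => P i x) f (𝓝 x))
    (heig : ∃ ψ, ψ ≠ 0 ∧ M ψ = (l : ℂ) • ψ)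
    (hfinmult : FiniteDimensional ℂ
      ↥(LinearMap.ker ((M : H →ₗ[ℂ] H) - (l : ℂ) • LinearMap.id)))
    (hiso : ∃ ε > 0, ∀ z ∈ spectrum ℂ M, z ≠ (l : ℂ) → ε ≤ ‖z - (l : ℂ)‖) :
    ∃ zs : ι → ℂ, (∀ i, P i ≠ 0 → zs i ∈ spec2 (M : H →ₗ[ℂ] H) (P i)) ∧
      Tendsto zs f (𝓝 (l : ℂ)) := by
  have hisolated : ∀ᶠ z in 𝓝[spectrum ℂ M] (l : ℂ), z = (l : ℂ) := by
    obtain ⟨ε, hε, hgap⟩ := hiso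
    filter_upwards [self_mem_nhdsWithin,
      mem_nhdsWithin_of_mem_nhds (Metric.ball_mem_nhds (l : ℂ) hε)] with z hz hzl
    by_contra hne
    exact (hgap z hz hne).not_gt (mem_ball_iff_norm.1 hzl)
  obtain ⟨Q, C, hQ, hMQ, hQM, hQC⟩ := exists_isStarProjection_of_isolated hM.isStarNormal hisolated
  have hQker : Q.range ≤ LinearMap.ker ((M : H →ₗ[ℂ] H) - (l : ℂ) • LinearMap.id) := by
    rintro _ ⟨x, rfl⟩
    exact congr($hMQ x)
  have : FiniteDimensional ℂ Q.range := Submodule.finiteDimensional_of_le hQker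
  have hQP : Tendsto (fun i => Q * P i) f (𝓝 Q) :=
    tendsto_mul_of_tendsto_apply_range (fun i => (hP i).isSelfAdjoint) hQ.isSelfAdjoint
      fun x hx => hPlim x (sub_eq_zero.1 (hQker hx))
  obtain ⟨ψ, hψ0, hψ⟩ := heig
  obtain ⟨zs, hzs, hlim⟩ := exists_tendsto_of_forall_isClosed
    (fun i => isClosed_spec2 (hP i).isIdempotentElem)
    (eventually_nonempty_spec2_inter_closedBall hM hP hQ.norm_le hQM hQC hQP hψ0 hψ (hPlim ψ hψ))
  exact ⟨zs, fun i hi => hzs i (spec2_nonempty (hP i).isIdempotentElem hi), hlim⟩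

end Limit

/-- Every isolated eigenvalue `λ` of finite multiplicity of a *bounded* self-adjoint operator
`M` belongs to the uniform limiting set `Λ` of the second order spectra `Spec₂(M|L_n)`,
where `L_n = ran P_n` is an `n`-dimensional subspace and `P_n x → x` for every `x`. -/
theorem isolated_eigenvalue_mem_limit_of_secondOrderSpectra_of_bounded
    (M : H →L[ℂ] H) (hM : IsSelfAdjoint M)
    (P : ℕ → H →L[ℂ] H)
    (hPsa : ∀ n, IsSelfAdjoint (P n))
    (hPidem : ∀ n, IsIdempotentElem (P n))
    (hPfin : ∀ n, FiniteDimensional ℂ (LinearMap.range (P n : H →ₗ[ℂ] H)))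
    (hPdim : ∀ n, Module.finrank ℂ (LinearMap.range (P n : H →ₗ[ℂ] H)) = n)
    (hPlim : ∀ x : H, Tendsto (fun n => P n x) atTop (𝓝 x))
    -- `λ` is an isolated eigenvalue of `M` of finite multiplicity:
    (l : ℝ)
    (heig : ∃ ψ, ψ ≠ 0 ∧ M ψ = (l : ℂ) • ψ)
    (hfinmult : FiniteDimensional ℂ
      ↥(LinearMap.ker ((M : H →ₗ[ℂ] H) - (l : ℂ) • LinearMap.id)))
    (hiso : ∃ ε > 0, ∀ z ∈ spectrum ℂ M, z ≠ (l : ℂ) → ε ≤ ‖z - (l : ℂ)‖) :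
    -- conclusion: `λ ∈ Λ`
    ∃ zs : ℕ → ℂ, (∀ n, 1 ≤ n → zs n ∈ spec2 (M : H →ₗ[ℂ] H) (P n)) ∧
      Tendsto zs atTop (𝓝 (l : ℂ)) := by
  obtain ⟨zs, hzs, hlim⟩ :=
    isolated_eigenvalue_mem_limit_of_secondOrderSpectra_of_bounded_general M hM P
      (fun n => ⟨hPidem n, hPsa n⟩) l (fun x _ => hPlim x) heig hfinmult hiso
  refine ⟨zs, fun n hn => hzs n fun hPn => ?_, hlim⟩
  have hdim := hPdim n
  rw [hPn, ContinuousLinearMap.toLinearMap_zero, LinearMap.range_zero, finrank_bot] at hdim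
  exact (Nat.one_le_iff_ne_zero.1 hn) hdim.symm

end
end

section
/- Let M be a bounded self-adjoint operator on a complex Hilbert space H and (P_n) orthogonal projections with n-dimensional ranges L_n such that P_n x → x for all x ∈ H. If λ ∈ Spec M, then σ_n(λ) → 0 as n → ∞; that is, Spec M ⊆ Σ ∩ ℝ. -/
open Filter Topology

noncomputable section

variable {H : Type*} [NormedAddCommGroup H] [InnerProductSpace ℂ H] [CompleteSpace H]

/-- `σ_n(z) = inf {‖P (M - z)² v‖ / ‖v‖ : 0 ≠ v ∈ ran P}`. -/
def sigma2 (M : H →ₗ[ℂ] H) (P : H →L[ℂ] H) (z : ℂ) : ℝ :=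
  sInf {r : ℝ | ∃ v, v ∈ LinearMap.range (P : H →ₗ[ℂ] H) ∧ v ≠ 0 ∧ r = ‖P (sqz M z v)‖ / ‖v‖}

/-! For a normal operator, every point of the spectrum is an approximate eigenvalue, so some vector
`x ≠ 0` makes `‖(M - z)² x‖ / ‖x‖` as small as desired. The vectors `P_n x` are admissible in the
infimum defining `σ_n(z)`, and `P_n (M - z)² P_n x → (M - z)² x`: strong convergence is preserved
under products because `(P_n)` is uniformly bounded. Hence
`limsup σ_n(z) ≤ ‖(M - z)² x‖ / ‖x‖`. -/

section StrongConvergence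

variable {ι 𝕜 E F : Type*} [NontriviallyNormedField 𝕜] [SeminormedAddCommGroup E]
  [NormedSpace 𝕜 E] [CompleteSpace E] [SeminormedAddCommGroup F] [NormedSpace 𝕜 F]

theorem exists_opNorm_le_of_tendsto_apply {T : ℕ → E →L[𝕜] F} {S : E → F}
    (hT : ∀ x, Tendsto (T · x) atTop (𝓝 (S x))) : ∃ C, ∀ n, ‖T n‖ ≤ C := by
  refine banach_steinhaus fun x => ?_
  obtain ⟨C, hC⟩ := (hT x).norm.bddAbove_range
  exact ⟨C, Set.forall_mem_range.mp hC⟩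

theorem tendsto_apply_of_forall_tendsto_apply {𝓕 : Filter ι} [𝓕.IsCountablyGenerated]
    {T : ι → E →L[𝕜] F} {S : E → F} (hT : ∀ x, Tendsto (T · x) 𝓕 (𝓝 (S x)))
    {u : ι → E} {x : E} (hu : Tendsto u 𝓕 (𝓝 x)) :
    Tendsto (fun i => T i (u i)) 𝓕 (𝓝 (S x)) := by
  refine tendsto_of_seq_tendsto fun s hs => ?_
  obtain ⟨C, hC⟩ := exists_opNorm_le_of_tendsto_apply fun y => (hT y).comp hs
  have hu_sub : Tendsto (fun n => C * ‖u (s n) - x‖) atTop (𝓝 0) := by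
    simpa only [sub_self, norm_zero, mul_zero, Function.comp_apply] using
      (((hu.comp hs).sub_const x).norm).const_mul C
  have hT_sub : Tendsto (fun n => T (s n) (u (s n) - x)) atTop (𝓝 0) :=
    squeeze_zero_norm (fun n => (T (s n)).le_of_opNorm_le (hC n) _) hu_sub
  simpa only [map_sub, sub_add_cancel, zero_add, Function.comp_def] using
    hT_sub.add ((hT x).comp hs)

theorem tendsto_norm_compression_div_norm {𝓕 : Filter ι} [𝓕.IsCountablyGenerated]
    {P : ι → E →L[𝕜] E} (hP : ∀ x, Tendsto (P · x) 𝓕 (𝓝 x)) {A : E → E} {x : E}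
    (hA : ContinuousAt A x) (hx : ‖x‖ ≠ 0) :
    Tendsto (fun i => ‖P i (A (P i x))‖ / ‖P i x‖) 𝓕 (𝓝 (‖A x‖ / ‖x‖)) := by
  have hAP : Tendsto (fun i => A (P i x)) 𝓕 (𝓝 (A x)) := hA.tendsto.comp (hP x)
  have hPAP : Tendsto (fun i => P i (A (P i x))) 𝓕 (𝓝 (A x)) :=
    tendsto_apply_of_forall_tendsto_apply hP hAP
  exact hPAP.norm.div (hP x).norm hx

end StrongConvergence

/-- `z` belongs to the approximate point spectrum of `T`. Instead of unit vectors the definition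
uses all vectors; the strict inequality excludes `x = 0`. -/
def IsApproxEigenvalue {𝕜 E : Type*} [NormedField 𝕜] [SeminormedAddCommGroup E] [NormedSpace 𝕜 E]
    (T : E →L[𝕜] E) (z : 𝕜) : Prop :=
  ∀ ε > 0, ∃ x, ‖T x - z • x‖ < ε * ‖x‖

section Normal

theorem isStarNormal_sub_algebraMap {R A : Type*} [CommSemiring R] [StarRing R] [Ring A]
    [StarRing A] [Algebra R A] [StarModule R A] {a : A} (ha : IsStarNormal a) (r : R) :
    IsStarNormal (a - algebraMap R A r) := by
  have hcomm : Commute a (star (r • (1 : A))) := by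
    rw [star_smul, star_one]
    exact (Commute.one_right a).smul_right (star r)
  rw [Algebra.algebraMap_eq_smul_one]
  exact hcomm.isStarNormal_sub

variable {𝕜 E : Type*} [RCLike 𝕜] [NormedAddCommGroup E] [InnerProductSpace 𝕜 E] [CompleteSpace E]

theorem isUnit_of_isStarNormal_of_antilipschitzWith {T : E →L[𝕜] E} (hT : IsStarNormal T)
    {K : NNReal} (hK : AntilipschitzWith K T) : IsUnit T := by
  have hker : T.ker = ⊥ := LinearMap.ker_eq_bot.mpr hK.injective
  have hdense : T.range.topologicalClosure = ⊤ := by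
    rw [Submodule.topologicalClosure_eq_top_iff,
      ContinuousLinearMap.IsStarNormal.orthogonal_range hT, hker]
  rw [ContinuousLinearMap.isUnit_iff_bijective,
    ContinuousLinearMap.bijective_iff_dense_range_and_antilipschitz]
  exact ⟨hdense, K, hK⟩

theorem isApproxEigenvalue_of_mem_spectrum {T : E →L[𝕜] E} (hT : IsStarNormal T) {z : 𝕜}
    (hz : z ∈ spectrum 𝕜 T) : IsApproxEigenvalue T z := by
  intro ε hε
  by_contra! hbelow
  obtain ⟨K, hK⟩ : ∃ K, AntilipschitzWith K (T - algebraMap 𝕜 (E →L[𝕜] E) z) :=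
    antilipschitzWith_iff_exists_mul_le_norm.mpr ⟨ε, hε, hbelow⟩
  have hunit : IsUnit (T - algebraMap 𝕜 (E →L[𝕜] E) z) :=
    isUnit_of_isStarNormal_of_antilipschitzWith (isStarNormal_sub_algebraMap hT z) hK
  exact spectrum.mem_iff.mp hz (IsUnit.sub_iff.mp hunit)

end Normal

section SecondOrder

variable {E : Type*} [NormedAddCommGroup E] [InnerProductSpace ℂ E]

theorem sqz_coe (M : E →L[ℂ] E) (z : ℂ) :
    sqz (M : E →ₗ[ℂ] E) z = ((M - z • .id ℂ E) ∘L (M - z • .id ℂ E) : E →L[ℂ] E) :=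
  rfl

theorem continuous_sqz (M : E →L[ℂ] E) (z : ℂ) : Continuous (sqz (M : E →ₗ[ℂ] E) z) := by
  rw [sqz_coe]
  exact ContinuousLinearMap.continuous _

theorem IsApproxEigenvalue.exists_norm_sqz_lt {M : E →L[ℂ] E} {z : ℂ}
    (hz : IsApproxEigenvalue M z) {ε : ℝ} (hε : 0 < ε) :
    ∃ x, ‖sqz (M : E →ₗ[ℂ] E) z x‖ < ε * ‖x‖ := by
  set A := M - z • .id ℂ E
  obtain ⟨x, hx⟩ := hz (ε / (‖A‖ + 1)) (by positivity)
  refine ⟨x, ?_⟩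
  calc ‖sqz (M : E →ₗ[ℂ] E) z x‖ = ‖A (M x - z • x)‖ := rfl
    _ ≤ (‖A‖ + 1) * ‖M x - z • x‖ := A.le_of_opNorm_le (le_add_of_nonneg_right zero_le_one) _
    _ < (‖A‖ + 1) * (ε / (‖A‖ + 1) * ‖x‖) := by gcongr
    _ = ε * ‖x‖ := by field_simp

theorem sigma2_nonneg (M : E →ₗ[ℂ] E) (P : E →L[ℂ] E) (z : ℂ) : 0 ≤ sigma2 M P z := by
  refine Real.sInf_nonneg ?_
  rintro _ ⟨v, -, -, rfl⟩
  positivity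

theorem sigma2_le (M : E →ₗ[ℂ] E) {P : E →L[ℂ] E} (z : ℂ) {x : E} (hx : P x ≠ 0) :
    sigma2 M P z ≤ ‖P (sqz M z (P x))‖ / ‖P x‖ := by
  refine csInf_le ⟨0, ?_⟩ ⟨P x, ⟨x, rfl⟩, hx, rfl⟩
  rintro _ ⟨v, -, -, rfl⟩
  positivity

theorem IsApproxEigenvalue.tendsto_sigma2 [CompleteSpace E] {ι : Type*} {𝓕 : Filter ι}
    [𝓕.IsCountablyGenerated] {P : ι → E →L[ℂ] E} (hP : ∀ x, Tendsto (P · x) 𝓕 (𝓝 x))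
    {M : E →L[ℂ] E} {z : ℂ} (hz : IsApproxEigenvalue M z) :
    Tendsto (fun i => sigma2 (M : E →ₗ[ℂ] E) (P i) z) 𝓕 (𝓝 0) := by
  refine tendsto_order.mpr
    ⟨fun a ha => .of_forall fun i => ha.trans_le (sigma2_nonneg _ _ _), fun ε hε => ?_⟩
  obtain ⟨x, hx⟩ := hz.exists_norm_sqz_lt hε
  have hx_pos : 0 < ‖x‖ := pos_of_mul_pos_right ((norm_nonneg _).trans_lt hx) hε.le
  have hlim := tendsto_norm_compression_div_norm hP (continuous_sqz M z).continuousAt hx_pos.ne'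
  have hquot : ∀ᶠ i in 𝓕, ‖P i (sqz (M : E →ₗ[ℂ] E) z (P i x))‖ / ‖P i x‖ < ε :=
    hlim.eventually_lt_const ((div_lt_iff₀ hx_pos).mpr hx)
  filter_upwards [hquot, (hP x).eventually_ne (norm_pos_iff.mp hx_pos)] with i hi hPx
  exact (sigma2_le _ z hPx).trans_lt hi

end SecondOrder

theorem spectrum_subset_Sigma_general {ι : Type*} {𝓕 : Filter ι} [𝓕.IsCountablyGenerated]
    (M : H →L[ℂ] H) (hM : IsStarNormal M) (P : ι → H →L[ℂ] H)
    (hP : ∀ x, Tendsto (P · x) 𝓕 (𝓝 x)) (l : ℂ) (hl : l ∈ spectrum ℂ M) :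
    Tendsto (fun i => sigma2 (M : H →ₗ[ℂ] H) (P i) l) 𝓕 (𝓝 0) :=
  (isApproxEigenvalue_of_mem_spectrum hM hl).tendsto_sigma2 hP

/-- For a bounded self-adjoint operator `M`, every spectral point `λ` satisfies
`σ_n(λ) → 0`; that is, `Spec M ⊆ Σ ∩ ℝ`. -/
theorem spectrum_subset_Sigma
    (M : H →L[ℂ] H) (hM : IsSelfAdjoint M)
    (P : ℕ → H →L[ℂ] H)
    (hPsa : ∀ n, IsSelfAdjoint (P n))
    (hPidem : ∀ n, IsIdempotentElem (P n))
    (hPfin : ∀ n, FiniteDimensional ℂ (LinearMap.range (P n : H →ₗ[ℂ] H)))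
    (hPdim : ∀ n, Module.finrank ℂ (LinearMap.range (P n : H →ₗ[ℂ] H)) = n)
    (hPlim : ∀ x : H, Tendsto (fun n => P n x) atTop (𝓝 x))
    (l : ℂ) (hl : l ∈ spectrum ℂ M) :
    Tendsto (fun n => sigma2 (M : H →ₗ[ℂ] H) (P n) l) atTop (𝓝 0) :=
  spectrum_subset_Sigma_general M hM.isStarNormal P hPlim l hl

end
end

section
/- Let M be a bounded self-adjoint operator with M² = I (equivalently Spec M ⊆ {−1, 1}) and L_n a finite-dimensional subspace with orthogonal projection P_n. Then for z ≠ 0, z ∈ Spec₂(M|L_n) if and only if (z + z^{-1})/2 is an eigenvalue of the compression M_n = P_n M|L_n; consequently Spec₂(M|L_n) is contained in the unit circle {z : |z| = 1}. -/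
open Filter Topology

noncomputable section

variable {H : Type*} [NormedAddCommGroup H] [InnerProductSpace ℂ H] [CompleteSpace H]

/-!
Since `M² = 1`, compressing `(M - z)²` to the range `L` of the projection gives the linear pencil
`(1 + z²) - 2 z M_L`. It is the identity at `z = 0`, and for `z ≠ 0` it equals
`2 z ((z + z⁻¹) / 2 - M_L)`, so membership in `Spec₂` is a condition on the Joukowski image
`(z + z⁻¹) / 2`. As `M` is unitary and the projection is a contraction, `M_L` is a self-adjoint
contraction, whose spectrum lies in `[-1, 1]`; the Joukowski preimage of `[-1, 1]` is the unit
circle.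
-/

theorem norm_eq_one_of_add_inv_div_two_mem_Icc {z : ℂ} (hz : z ≠ 0) {t : ℝ}
    (ht : t ∈ Set.Icc (-1) 1) (hzt : (z + z⁻¹) / 2 = t) : ‖z‖ = 1 := by
  obtain ⟨θ, rfl⟩ : ∃ θ : ℝ, Real.cos θ = t := ⟨Real.arccos t, Real.cos_arccos ht.1 ht.2⟩
  have roots :
      (z - Complex.exp (θ * Complex.I)) * (z - Complex.exp ((-θ : ℝ) * Complex.I)) = 0 := by
    have exp_ne_zero := Complex.exp_ne_zero (θ * Complex.I)
    rw [Complex.ofReal_cos, Complex.cos, neg_mul, Complex.exp_neg] at hzt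
    rw [Complex.ofReal_neg, neg_mul, Complex.exp_neg]
    field_simp at hzt ⊢
    linear_combination hzt
  rcases mul_eq_zero.mp roots with h | h <;>
    rw [sub_eq_zero.mp h, Complex.norm_exp_ofReal_mul_I]

section IdempotentCompression

omit [CompleteSpace H]

variable {P : H →L[ℂ] H} {T : Module.End ℂ H}

theorem apply_coe_range_of_isIdempotentElem (hP : IsIdempotentElem P)
    (x : LinearMap.range (P : H →ₗ[ℂ] H)) : P x = x :=
  (LinearMap.IsIdempotentElem.mem_range_iff
    (ContinuousLinearMap.IsIdempotentElem.toLinearMap hP)).mp x.2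

theorem mem_spectrum_compress_iff_exists_eigenvector
    [FiniteDimensional ℂ (LinearMap.range (P : H →ₗ[ℂ] H))] {μ : ℂ} :
    μ ∈ spectrum ℂ (compress P T : Module.End ℂ _) ↔
      ∃ v, v ∈ LinearMap.range (P : H →ₗ[ℂ] H) ∧ v ≠ 0 ∧ P (T v) = μ • v := by
  rw [← Module.End.hasEigenvalue_iff_mem_spectrum]
  constructor
  · intro hμ
    obtain ⟨v, hv⟩ := hμ.exists_hasEigenvector
    exact ⟨v, v.2, Subtype.coe_ne_coe.mpr hv.2, congrArg Subtype.val hv.apply_eq_smul⟩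
  · rintro ⟨v, hvP, hv0, hv⟩
    exact Module.End.hasEigenvalue_of_hasEigenvector (x := ⟨v, hvP⟩)
      ⟨Module.End.mem_eigenspace_iff.mpr (Subtype.ext hv), Subtype.coe_ne_coe.mp hv0⟩

theorem mem_spec2_iff_not_isUnit {z : ℂ} :
    z ∈ spec2 T P ↔ ¬IsUnit (compress P (sqz T z) : Module.End ℂ _) :=
  (Module.End.isUnit_iff _).not.symm

theorem compress_sqz_of_mul_self_eq_one (hP : IsIdempotentElem P) (hT : T * T = 1) (z : ℂ) :
    compress P (sqz T z) = (1 + z ^ 2) • (1 : Module.End ℂ _) - (2 * z) • compress P T := by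
  ext x
  have hTT : T (T x) = x := LinearMap.congr_fun hT x
  change P (T (T x - z • (x : H)) - z • (T x - z • (x : H))) =
    (1 + z ^ 2) • (x : H) - (2 * z) • P (T x)
  simp only [map_sub, map_smul, hTT, apply_coe_range_of_isIdempotentElem hP]
  module

theorem zero_notMem_spec2 (hP : IsIdempotentElem P) (hT : T * T = 1) : (0 : ℂ) ∉ spec2 T P := by
  rw [mem_spec2_iff_not_isUnit, not_not, compress_sqz_of_mul_self_eq_one hP hT]
  simp

theorem mem_spec2_iff_mem_spectrum_compress (hP : IsIdempotentElem P) (hT : T * T = 1) {z : ℂ}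
    (hz : z ≠ 0) :
    z ∈ spec2 T P ↔ (z + z⁻¹) / 2 ∈ spectrum ℂ (compress P T : Module.End ℂ _) := by
  have pencil : compress P (sqz T z) =
      Units.mk0 (2 * z) (mul_ne_zero two_ne_zero hz) •
        (algebraMap ℂ (Module.End ℂ _) ((z + z⁻¹) / 2) - compress P T) := by
    have joukowski : 1 + z ^ 2 = 2 * z * ((z + z⁻¹) / 2) := by field_simp; ring
    rw [compress_sqz_of_mul_self_eq_one hP hT, joukowski, mul_smul, Units.smul_mk0,
      Algebra.algebraMap_eq_smul_one]
    exact (smul_sub _ _ _).symm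
  rw [mem_spec2_iff_not_isUnit, pencil, isUnit_smul_iff, spectrum.mem_iff]

end IdempotentCompression

theorem spectrum_subset_ofReal_image_Icc_of_isSymmetric {E : Type*} [NormedAddCommGroup E]
    [InnerProductSpace ℂ E] [CompleteSpace E] {T : Module.End ℂ E} (hT : T.IsSymmetric)
    {C : ℝ} (hC : 0 ≤ C) (hTC : ∀ x, ‖T x‖ ≤ C * ‖x‖) :
    spectrum ℂ T ⊆ Complex.ofReal '' Set.Icc (-C) C := by
  intro μ hμ
  let A : E →L[ℂ] E := hT.toSelfAdjoint
  have hμA : μ ∈ spectrum ℂ A := by rwa [ContinuousLinearMap.spectrum_eq]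
  have μ_real : μ = μ.re := hT.toSelfAdjoint.2.mem_spectrum_eq_re hμA
  have norm_le : ‖μ‖ ≤ C :=
    calc ‖μ‖ ≤ ‖A‖ * ‖(1 : E →L[ℂ] E)‖ := spectrum.norm_le_norm_mul_of_mem hμA
      _ ≤ C * 1 := mul_le_mul (A.opNorm_le_bound hC hTC) ContinuousLinearMap.norm_id_le
          (norm_nonneg _) hC
      _ = C := mul_one C
  exact ⟨μ.re, abs_le.mp ((Complex.abs_re_le_norm μ).trans norm_le), μ_real.symm⟩

section OrthogonalCompression

variable {P : H →L[ℂ] H} {T : Module.End ℂ H}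

theorem isSymmetric_compress (hP : IsStarProjection P) (hT : T.IsSymmetric) :
    (compress P T).IsSymmetric := by
  intro x y
  calc inner ℂ (P (T x)) (y : H) = inner ℂ (T x) (P y) := hP.isSelfAdjoint.isSymmetric _ _
    _ = inner ℂ (T x) (y : H) := by
        rw [apply_coe_range_of_isIdempotentElem hP.isIdempotentElem]
    _ = inner ℂ (x : H) (T y) := hT _ _
    _ = inner ℂ (P x) (T y) := by
        rw [apply_coe_range_of_isIdempotentElem hP.isIdempotentElem]
    _ = inner ℂ (x : H) (P (T y)) := hP.isSelfAdjoint.isSymmetric _ _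

theorem norm_compress_apply_le (hP : IsStarProjection P) {C : ℝ} (hTC : ∀ x, ‖T x‖ ≤ C * ‖x‖)
    (x : LinearMap.range (P : H →ₗ[ℂ] H)) : ‖compress P T x‖ ≤ C * ‖x‖ :=
  calc ‖P (T x)‖ ≤ 1 * ‖T x‖ := P.le_of_opNorm_le hP.norm_le _
    _ = ‖T x‖ := one_mul _
    _ ≤ C * ‖(x : H)‖ := hTC x

theorem spectrum_compress_subset_ofReal_image_Icc (hP : IsStarProjection P) (hT : T.IsSymmetric)
    {C : ℝ} (hC : 0 ≤ C) (hTC : ∀ x, ‖T x‖ ≤ C * ‖x‖) :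
    spectrum ℂ (compress P T : Module.End ℂ _) ⊆ Complex.ofReal '' Set.Icc (-C) C :=
  have := (ContinuousLinearMap.IsIdempotentElem.isClosed_range
    hP.isIdempotentElem).completeSpace_coe
  spectrum_subset_ofReal_image_Icc_of_isSymmetric (isSymmetric_compress hP hT) hC
    (norm_compress_apply_le hP hTC)

end OrthogonalCompression

theorem norm_apply_of_isSelfAdjoint_of_mul_self_eq_one {M : H →L[ℂ] H} (hM : IsSelfAdjoint M)
    (hM2 : M * M = 1) (x : H) : ‖M x‖ = ‖x‖ :=
  ContinuousLinearMap.norm_map_of_mem_unitary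
    (Unitary.mem_iff.mpr ⟨by rwa [hM.star_eq], by rwa [hM.star_eq]⟩) x

theorem spec2_of_involution_general
    (M : H →L[ℂ] H) (hM : IsSelfAdjoint M) (hM2 : M * M = 1)
    (P : H →L[ℂ] H) (hPsa : IsSelfAdjoint P) (hPidem : IsIdempotentElem P) :
    (∀ z : ℂ, z ≠ 0 →
      (z ∈ spec2 (M : H →ₗ[ℂ] H) P ↔
        (z + z⁻¹) / 2 ∈ spectrum ℂ (compress P (M : H →ₗ[ℂ] H) : Module.End ℂ _))) ∧
    ∀ z ∈ spec2 (M : H →ₗ[ℂ] H) P, ‖z‖ = 1 := by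
  have involutive : (M : Module.End ℂ H) * (M : Module.End ℂ H) = 1 :=
    congrArg ContinuousLinearMap.toLinearMap hM2
  have mem_iff (z : ℂ) (hz : z ≠ 0) :=
    mem_spec2_iff_mem_spectrum_compress hPidem involutive hz
  refine ⟨mem_iff, fun z hz => ?_⟩
  have z_ne_zero : z ≠ 0 := by
    rintro rfl
    exact zero_notMem_spec2 hPidem involutive hz
  have contraction (x : H) : ‖M x‖ ≤ 1 * ‖x‖ := by
    rw [norm_apply_of_isSelfAdjoint_of_mul_self_eq_one hM hM2, one_mul]
  obtain ⟨t, ht, hzt⟩ := spectrum_compress_subset_ofReal_image_Icc ⟨hPidem, hPsa⟩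
    hM.isSymmetric zero_le_one contraction ((mem_iff z z_ne_zero).mp hz)
  exact norm_eq_one_of_add_inv_div_two_mem_Icc z_ne_zero ht hzt.symm

/-- For a bounded self-adjoint involution (`M² = 1`) and `z ≠ 0`, `z ∈ Spec₂(M|L)` iff
`(z + z⁻¹)/2` is an eigenvalue of the compression `M_L = P M |_L`; consequently
`Spec₂(M|L)` is contained in the unit circle. -/
theorem spec2_of_involution
    (M : H →L[ℂ] H) (hM : IsSelfAdjoint M) (hM2 : M * M = 1)
    (P : H →L[ℂ] H)
    (hPsa : IsSelfAdjoint P)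
    (hPidem : IsIdempotentElem P)
    (hPfin : FiniteDimensional ℂ (LinearMap.range (P : H →ₗ[ℂ] H))) :
    (∀ z : ℂ, z ≠ 0 →
      (z ∈ spec2 (M : H →ₗ[ℂ] H) P ↔
        ∃ v, v ∈ LinearMap.range (P : H →ₗ[ℂ] H) ∧ v ≠ 0 ∧ P (M v) = ((z + z⁻¹) / 2) • v)) ∧
    ∀ z ∈ spec2 (M : H →ₗ[ℂ] H) P, ‖z‖ = 1 := by
  obtain ⟨mem_iff, norm_eq_one⟩ := spec2_of_involution_general M hM hM2 P hPsa hPidem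
  exact ⟨fun z hz => (mem_iff z hz).trans mem_spectrum_compress_iff_exists_eigenvector,
    norm_eq_one⟩

end
end
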